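/- Let f_1,…,f_n be MRF (submodular dichotomous) valuations on a finite item set M and let A be a Lorenz dominating allocation. Then every agent receives at least half her maximin share: for every agent i, 2·f_i(A_i) ≥ maximin share of agent i. -/

import Mathlib

open Finset
open scoped Classical

variable {n : ℕ} {I : Type*} [DecidableEq I] [Fintype I]

/-- An allocation assigns pairwise disjoint bundles of items to the agents
(items may remain unallocated). -/
def IsAllocation (A : Fin n → Finset I) : Prop :=
  ∀ i j : Fin n, i ≠ j → Disjoint (A i) (A j)

/-- The vector of utilities of an allocation under a profile of valuations. -/
def util {α : Type*} (f : Fin n → Finset I → α) (A : Fin n → Finset I) : Fin n → α :=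
  fun i => f i (A i)

/-- The entries of the vector `u`, sorted in nondecreasing order. -/
noncomputable def sortedVec {α : Type*} [LinearOrder α] (u : Fin n → α) : List α :=
  (Finset.univ.val.map u).sort (· ≤ ·)

/-- `u` Lorenz-dominates `v`: for each `k`, the sum of the `k` smallest entries of `u`
is at least the sum of the `k` smallest entries of `v`. -/
def LorenzGE {α : Type*} [LinearOrder α] [AddCommMonoid α] (u v : Fin n → α) : Prop :=
  ∀ k : ℕ, ((sortedVec v).take k).sum ≤ ((sortedVec u).take k).sum

/-- A matroid rank function: a normalized submodular valuation with dichotomous marginals. -/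
structure IsMRF (f : Finset I → ℕ) : Prop where
  empty : f ∅ = 0
  submod : ∀ S T : Finset I, S ⊆ T → ∀ a : I,
      f (insert a T) + f S ≤ f (insert a S) + f T
  dichot : ∀ (S : Finset I) (a : I), f (insert a S) = f S ∨ f (insert a S) = f S + 1

/-- Non-redundancy: removing any item from any agent's bundle strictly decreases its value. -/
def NonRedundant (f : Fin n → Finset I → ℕ) (A : Fin n → Finset I) : Prop :=
  ∀ i : Fin n, ∀ a ∈ A i, f i ((A i).erase a) < f i (A i)

/-- A Lorenz dominating allocation. -/
def LorenzDominating (f : Fin n → Finset I → ℕ) (A : Fin n → Finset I) : Prop :=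
  ∀ B : Fin n → Finset I, IsAllocation B → LorenzGE (util f A) (util f B)

/-- The σ-perturbed utilities: agent `i` gets `f i (A i) + σ(i)/n²`, where the priority
`σ(i)` ranges over `{1,…,n}`. -/
noncomputable def pUtil (σ : Equiv.Perm (Fin n)) (f : Fin n → Finset I → ℕ)
    (A : Fin n → Finset I) : Fin n → ℝ :=
  fun i => (f i (A i) : ℝ) + (((σ i : ℕ) : ℝ) + 1) / (n : ℝ) ^ 2

/-- A σ-Lorenz dominating allocation. -/
def SigmaLorenzDom (σ : Equiv.Perm (Fin n)) (f : Fin n → Finset I → ℕ)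
    (A : Fin n → Finset I) : Prop :=
  ∀ B : Fin n → Finset I, IsAllocation B → LorenzGE (pUtil σ f A) (pUtil σ f B)

/-- Restriction of a valuation to a subset `D` of the items. -/
def restrictVal (f : Finset I → ℕ) (D : Finset I) : Finset I → ℕ := fun S => f (S ∩ D)

/-- A partition of all the items into `n` (possibly empty) bundles. -/
def IsPartition (P : Fin n → Finset I) : Prop :=
  (∀ i j : Fin n, i ≠ j → Disjoint (P i) (P j)) ∧ ∀ a : I, ∃ j, a ∈ P j

/-- An XOS valuation: the pointwise maximum of a finite nonempty family of
nonnegative additive valuations. -/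
def IsXOS (f : Finset I → ℝ) : Prop :=
  ∃ (k : ℕ) (w : Fin (k + 1) → I → ℝ),
    (∀ t a, 0 ≤ w t a) ∧
    ∀ S : Finset I, f S = Finset.univ.sup' Finset.univ_nonempty (fun t => ∑ a ∈ S, w t a)

/-- A dichotomous valuation (real-valued version). -/
def IsDichotomousR (f : Finset I → ℝ) : Prop :=
  ∀ (S : Finset I) (a : I), f (insert a S) = f S ∨ f (insert a S) = f S + 1

/-- Envy-freeness up to one good. -/
def EF1 (f : Fin n → Finset I → ℝ) (A : Fin n → Finset I) : Prop :=
  ∀ i j : Fin n, f i (A j) ≤ f i (A i) ∨ ∃ e ∈ A j, f i ((A j).erase e) ≤ f i (A i)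

/-- The maximum welfare attainable by a set `S` of agents. -/
noncomputable def maxWelfare (f : Fin n → Finset I → ℕ) (S : Finset (Fin n)) : ℕ :=
  Finset.sup (Finset.univ.filter fun B : Fin n → Finset I => IsAllocation B)
    (fun B => ∑ j ∈ S, f j (B j))

/-- An allocation extended with index `none` for the set of unallocated items. -/
def extAlloc (A : Fin n → Finset I) : Option (Fin n) → Finset I
  | none => Finset.univ \ Finset.univ.biUnion A
  | some i => A i

/-!
Lorenz domination is domination of every truncated welfare `∑ i, min c (u i)`. Fix an agent `i`
with utility `u` and truncate at `c = u + 1`. Handing `i` an item that she finds useful on top of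
her bundle raises her truncated utility, so some other agent `k` must lose by it: the item is
irredundant in the bundle of `k`, and `k` has utility at most `u + 1`. The irredundant items of a
bundle are independent, so `k` accounts for at most `u + 1` of these items, and the `n - 1` other
agents for at most `(n - 1) * (u + 1)`. On the other hand, a bundle is worth to `i` at most `u` plus
the number of its useful items, so `n` disjoint bundles worth more than `2 * u` each would contain
at least `n * (u + 1)` of them.
-/

section Truncation

variable {α : Type*} [LinearOrder α]

theorem length_sortedVec (u : Fin n → α) : (sortedVec u).length = n := by
  simp [sortedVec]

theorem sum_map_sortedVec {β : Type*} [AddCommMonoid β] (g : α → β) (u : Fin n → α) :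
    ((sortedVec u).map g).sum = ∑ i, g (u i) := by
  rw [← Multiset.sum_coe, ← Multiset.map_coe, sortedVec, Multiset.sort_eq, Multiset.map_map]
  rfl

variable [AddCommMonoid α]

theorem exists_sum_map_min_eq_sum_take_add_nsmul (c : α) {l : List α} (hl : l.SortedLE) :
    ∃ k, (l.map (min c)).sum = (l.take k).sum + (l.length - k) • c := by
  induction l with
  | nil => exact ⟨0, by simp⟩
  | cons x l ih =>
    obtain ⟨hx, hl⟩ := List.pairwise_cons.1 hl.pairwise
    rcases le_total x c with hxc | hcx
    · obtain ⟨k, hk⟩ := ih hl.sortedLE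
      exact ⟨k + 1, by simp [hk, min_eq_right hxc, add_assoc]⟩
    · have hconst : ∀ y ∈ (x :: l).map (min c), y = c := by
        simpa [hcx] using fun y hy => hcx.trans (hx y hy)
      exact ⟨0, by simpa using List.sum_eq_card_nsmul _ c hconst⟩

variable [IsOrderedAddMonoid α]

theorem sum_map_min_le_sum_take_add_nsmul (c : α) (l : List α) (k : ℕ) :
    (l.map (min c)).sum ≤ (l.take k).sum + (l.length - k) • c := by
  have htake : ((l.take k).map (min c)).sum ≤ (l.take k).sum := by
    simpa only [List.map_id'] using List.sum_le_sum fun x (_ : x ∈ l.take k) => min_le_right c x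
  have hdrop : ((l.drop k).map (min c)).sum ≤ (l.length - k) • c := by
    simpa only [List.length_map, List.length_drop] using
      List.sum_le_card_nsmul ((l.drop k).map (min c)) c
        (List.forall_mem_map.2 fun x _ => min_le_left c x)
  calc (l.map (min c)).sum
      = ((l.take k).map (min c)).sum + ((l.drop k).map (min c)).sum := by
        rw [← List.sum_append, ← List.map_append, List.take_append_drop]
    _ ≤ (l.take k).sum + (l.length - k) • c := add_le_add htake hdrop

theorem LorenzGE.sum_min_le {u v : Fin n → α} (h : LorenzGE u v) (c : α) :
    ∑ i, min c (v i) ≤ ∑ i, min c (u i) := by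
  obtain ⟨k, hk⟩ := exists_sum_map_min_eq_sum_take_add_nsmul c
    (Multiset.pairwise_sort (Finset.univ.val.map u) (· ≤ ·)).sortedLE
  rw [← sum_map_sortedVec, ← sum_map_sortedVec]
  calc ((sortedVec v).map (min c)).sum
      ≤ ((sortedVec v).take k).sum + ((sortedVec v).length - k) • c :=
        sum_map_min_le_sum_take_add_nsmul c _ k
    _ ≤ ((sortedVec u).take k).sum + ((sortedVec u).length - k) • c := by
        rw [length_sortedVec, length_sortedVec]
        gcongr
        exact h k
    _ = ((sortedVec u).map (min c)).sum := hk.symm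

end Truncation

section Allocations

variable {I : Type*} [DecidableEq I]

/-- The item `a` has positive marginal value on top of the bundle `S`. For a matroid rank function
this says that `a` lies outside the span of `S`. -/
def IsUseful (f : Finset I → ℕ) (S : Finset I) (a : I) : Prop :=
  f S < f (insert a S)

/-- The item `a` is irredundant in the bundle `S`: removing it lowers the value. In particular
`a ∈ S`. For a matroid rank function this says that `a` is a coloop of the restriction to `S`. -/
def IsIrredundant (f : Finset I → ℕ) (S : Finset I) (a : I) : Prop :=
  f (S.erase a) < f S

theorem IsIrredundant.mem {f : Finset I → ℕ} {S : Finset I} {a : I} (h : IsIrredundant f S a) :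
    a ∈ S := by
  by_contra ha
  rw [IsIrredundant, Finset.erase_eq_of_notMem ha] at h
  exact h.false

namespace IsMRF

variable {f : Finset I → ℕ}

theorem le_insert (hf : IsMRF f) (S : Finset I) (a : I) : f S ≤ f (insert a S) := by
  rcases hf.dichot S a with h | h <;> omega

theorem insert_le_add_one (hf : IsMRF f) (S : Finset I) (a : I) : f (insert a S) ≤ f S + 1 := by
  rcases hf.dichot S a with h | h <;> omega

theorem monotone (hf : IsMRF f) : Monotone f :=
  Finset.monotone_iff_forall_le_insert.2 fun _ _ _ => hf.le_insert _ _

theorem le_erase_add_one (hf : IsMRF f) (S : Finset I) (a : I) : f S ≤ f (S.erase a) + 1 :=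
  (hf.monotone (Finset.insert_erase_subset a S)).trans (hf.insert_le_add_one _ a)

theorem union_le_add_card_isUseful (hf : IsMRF f) (S T : Finset I) :
    f (S ∪ T) ≤ f S + #{a ∈ T | IsUseful f S a} := by
  induction T using Finset.induction_on with
  | empty => simp
  | insert a T ha ih =>
    have hsub := hf.submod S (S ∪ T) Finset.subset_union_left a
    rw [Finset.union_insert, Finset.filter_insert]
    split_ifs with h
    · have hmarginal := hf.insert_le_add_one S a
      rw [Finset.card_insert_of_notMem (by simp [ha])]
      omega
    · rw [IsUseful] at h
      omega

theorem sum_le_card_mul_add_card_isUseful {ι : Type*} {s : Finset ι} {P : ι → Finset I}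
    (hf : IsMRF f) (hP : (s : Set ι).PairwiseDisjoint P) (S : Finset I) :
    ∑ j ∈ s, f (P j) ≤ #s * f S + #{a ∈ s.biUnion P | IsUseful f S a} := by
  have hdisj : (s : Set ι).PairwiseDisjoint fun j => {a ∈ P j | IsUseful f S a} :=
    fun j hj k hk hjk => Finset.disjoint_filter_filter (hP hj hk hjk)
  calc ∑ j ∈ s, f (P j)
      ≤ ∑ j ∈ s, (f S + #{a ∈ P j | IsUseful f S a}) := Finset.sum_le_sum fun j _ =>
        (hf.monotone Finset.subset_union_right).trans (hf.union_le_add_card_isUseful S (P j))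
    _ = #s * f S + #{a ∈ s.biUnion P | IsUseful f S a} := by
        rw [Finset.sum_add_distrib, Finset.sum_const, smul_eq_mul, Finset.filter_biUnion,
          Finset.card_biUnion hdisj]

/-- By submodularity, an item irredundant in `T` is useful on top of every subset of `T` that does
not contain it, so the items of `S` can be added one at a time, each with gain one. -/
theorem card_le_of_isIrredundant (hf : IsMRF f) {S T : Finset I}
    (h : ∀ a ∈ S, IsIrredundant f T a) : #S ≤ f S := by
  induction S using Finset.induction_on with
  | empty => simp
  | insert a S ha ih =>
    rw [Finset.forall_mem_insert] at h
    obtain ⟨haT, hST⟩ := h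
    have hsub : S ⊆ T.erase a := Finset.subset_erase.2 ⟨fun b hb => (hST b hb).mem, ha⟩
    have hgain := hf.submod S (T.erase a) hsub a
    rw [Finset.insert_erase haT.mem] at hgain
    have hcard := ih hST
    rw [IsIrredundant] at haT
    rw [Finset.card_insert_of_notMem ha]
    omega

end IsMRF

/-- The allocation obtained from `A` by handing the item `a` to agent `i`, taking it away from its
current holder, if any. -/
def transfer (A : Fin n → Finset I) (i : Fin n) (a : I) : Fin n → Finset I :=
  fun k => if k = i then insert a (A i) else (A k).erase a

theorem isAllocation_transfer {A : Fin n → Finset I} (hA : IsAllocation A) (i : Fin n) (a : I) :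
    IsAllocation (transfer A i a) := by
  intro j k hjk
  have hd := hA j k hjk
  rw [Finset.disjoint_left] at hd ⊢
  intro x hx hx'
  simp only [transfer] at hx hx'
  by_cases hj : j = i <;> by_cases hk : k = i <;> simp_all

namespace LorenzDominating

variable {f : Fin n → Finset I → ℕ} {A : Fin n → Finset I} {i : Fin n}

/-- Otherwise transferring `a` to `i` would raise the welfare truncated at `f i (A i) + 1`. -/
theorem exists_isIrredundant (hLD : LorenzDominating f A) (hA : IsAllocation A) {a : I}
    (ha : IsUseful (f i) (A i) a) :
    ∃ k ≠ i, IsIrredundant (f k) (A k) a ∧ f k ((A k).erase a) ≤ f i (A i) := by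
  by_contra! hcon
  set c := f i (A i) + 1
  have hgain : min c (f i (A i)) < min c (f i (transfer A i a i)) := by
    simp only [IsUseful, transfer, if_true] at ha ⊢
    omega
  have hnoloss : ∀ k, min c (f k (A k)) ≤ min c (f k (transfer A i a k)) := by
    intro k
    rcases eq_or_ne k i with rfl | hk
    · exact hgain.le
    · have hkeep := hcon k hk
      simp only [IsIrredundant, transfer, if_neg hk] at hkeep ⊢
      omega
  have hwelfare := (hLD _ (isAllocation_transfer hA i a)).sum_min_le c
  exact hwelfare.not_gt
    (Finset.sum_lt_sum (fun k _ => hnoloss k) ⟨i, Finset.mem_univ i, hgain⟩)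

theorem card_le_of_isUseful (hLD : LorenzDominating f A) (hf : ∀ k, IsMRF (f k))
    (hA : IsAllocation A) {T : Finset I} (hT : ∀ a ∈ T, IsUseful (f i) (A i) a) :
    #T ≤ (n - 1) * (f i (A i) + 1) := by
  have : Nonempty (Fin n) := ⟨i⟩
  choose! holder hne hirr hle using fun a ha => hLD.exists_isIrredundant hA (hT a ha)
  have hfibre : ∀ k ∈ Finset.univ.erase i, #{a ∈ T | holder a = k} ≤ f i (A i) + 1 := by
    intro k _
    rcases Finset.eq_empty_or_nonempty {a ∈ T | holder a = k} with hempty | ⟨a, ha⟩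
    · simp [hempty]
    have hirr_k : ∀ b ∈ ({b ∈ T | holder b = k} : Finset I), IsIrredundant (f k) (A k) b := by
      intro b hb
      obtain ⟨hbT, rfl⟩ := Finset.mem_filter.1 hb
      exact hirr b hbT
    obtain ⟨haT, rfl⟩ := Finset.mem_filter.1 ha
    calc #{b ∈ T | holder b = holder a}
        ≤ f (holder a) {b ∈ T | holder b = holder a} := (hf _).card_le_of_isIrredundant hirr_k
      _ ≤ f (holder a) (A (holder a)) := (hf _).monotone fun b hb => (hirr_k b hb).mem
      _ ≤ f (holder a) ((A (holder a)).erase a) + 1 := (hf _).le_erase_add_one _ a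
      _ ≤ f i (A i) + 1 := Nat.add_le_add_right (hle a haT) 1
  have hmaps : ∀ a ∈ T, holder a ∈ Finset.univ.erase i := fun a ha =>
    Finset.mem_erase.2 ⟨hne a ha, Finset.mem_univ _⟩
  simpa [mul_comm] using Finset.card_le_mul_card_image_of_maps_to hmaps _ hfibre

theorem sum_lt_of_isAllocation (hLD : LorenzDominating f A) (hf : ∀ k, IsMRF (f k))
    (hA : IsAllocation A) {P : Fin n → Finset I} (hP : IsAllocation P) :
    ∑ j, f i (P j) < n * (2 * f i (A i) + 1) := by
  set u := f i (A i)
  have hn : n - 1 < n := Nat.sub_one_lt_of_lt i.pos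
  calc ∑ j, f i (P j)
      ≤ #(Finset.univ : Finset (Fin n)) * u
          + #{a ∈ Finset.univ.biUnion P | IsUseful (f i) (A i) a} :=
        (hf i).sum_le_card_mul_add_card_isUseful (fun j _ k _ => hP j k) (A i)
    _ ≤ n * u + (n - 1) * (u + 1) := by
        rw [Finset.card_fin]
        gcongr
        exact hLD.card_le_of_isUseful hf hA fun a ha => (Finset.mem_filter.1 ha).2
    _ < n * u + n * (u + 1) := by gcongr
    _ = n * (2 * u + 1) := by ring

end LorenzDominating

theorem lorenz_dominating_half_maximin_general
    (f : Fin n → Finset I → ℕ) (hf : ∀ i, IsMRF (f i))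
    (A : Fin n → Finset I) (hA : IsAllocation A)
    (hLD : LorenzDominating f A) (i : Fin n)
    (P : Fin n → Finset I) (hP : IsAllocation P) :
    ∃ j : Fin n, f i (P j) ≤ 2 * f i (A i) := by
  have hsum : ∑ j, f i (P j) < ∑ _j : Fin n, (2 * f i (A i) + 1) := by
    simpa using hLD.sum_lt_of_isAllocation hf hA hP
  obtain ⟨j, _, hj⟩ := Finset.exists_lt_of_sum_lt hsum
  exact ⟨j, Nat.lt_succ_iff.1 hj⟩

end Allocations

/-- In every Lorenz dominating allocation for MRF valuations, every agent receives
at least half her maximin share. -/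
theorem lorenz_dominating_half_maximin
    {n : ℕ} {I : Type*} [DecidableEq I] [Fintype I]
    (f : Fin n → Finset I → ℕ) (hf : ∀ i, IsMRF (f i))
    (A : Fin n → Finset I) (hA : IsAllocation A)
    (hLD : LorenzDominating f A) :
    ∀ i : Fin n, ∀ P : Fin n → Finset I, IsPartition P →
      ∃ j : Fin n, f i (P j) ≤ 2 * f i (A i) :=
  fun i P hP => lorenz_dominating_half_maximin_general f hf A hA hLD i P hP.1
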